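/- Let G′ be a 2-connected outerplanar graph with Hamiltonian cycle C′, and let G be an induced subgraph of G′ (so G is outerplanar). Let B be a maximal 2-connected subgraph of G with at least 3 vertices (a nontrivial block of G), with Hamiltonian cycle C_B, and let v be a vertex of B having a neighbor in G outside B (a cutvertex of G lying in B). Then at least one of the two edges of C_B incident to v is not an edge of C′ (i.e., it is an internal edge of G′). -/

import Mathlib

/-!
Put `v` at the start of the Hamiltonian cycle `C'` and list the vertices cyclically as
`f 0 = v, f 1, …, f (n - 1)`. If both edges of `CB` at `v` lay on `C'`, they would be the two edges
of `C'` at `v`, so `f 1` and `f (n - 1)` would both belong to `B`. The neighbour `w = f k` of `v`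
outside `B` is then different from both, so `vw` is a chord, separating `f 1` from `f (n - 1)` on
`C'`. Since `B \ {v}` is connected, contains `f 1` and `f (n - 1)` and misses `w`, it has an edge
`f i f j` with `0 < i < k < j < n`. Two crossing chords of a cycle give a `K₄` minor
(`hasMinor_K4_of_crossing`), contradicting outerplanarity.
-/

/-- `H` is a minor of `G`: there are disjoint nonempty connected branch sets in `G`,
one for each vertex of `H`, with an edge of `G` between the branch sets of any two
adjacent vertices of `H`. -/
def HasMinor {V W : Type*} (G : SimpleGraph V) (H : SimpleGraph W) : Prop :=
  ∃ B : W → Set V,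
    (∀ w, (B w).Nonempty) ∧
    (∀ w, (G.induce (B w)).Connected) ∧
    (∀ w w', w ≠ w' → Disjoint (B w) (B w')) ∧
    (∀ w w', H.Adj w w' → ∃ x ∈ B w, ∃ y ∈ B w', G.Adj x y)

/-- A graph is outerplanar iff it has neither `K₄` nor `K_{2,3}` as a minor
(Chartrand–Harary characterization, taken as the definition). -/
def IsOuterplanar {V : Type*} (G : SimpleGraph V) : Prop :=
  ¬ HasMinor G (⊤ : SimpleGraph (Fin 4)) ∧
  ¬ HasMinor G (completeBipartiteGraph (Fin 2) (Fin 3))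
/-- The induced subgraph on a vertex subset `S` is 2-connected: `S` has at least 3
vertices and deleting any single vertex of `S` leaves the induced graph connected. -/
def TwoConnectedOn {V : Type*} (G : SimpleGraph V) (S : Set V) : Prop :=
  3 ≤ S.ncard ∧ ∀ v ∈ S, (G.induce (S \ {v})).Connected

/-- A segment of a walk, given by its sequence of vertices, induces a connected subgraph. -/
lemma connected_induce_image_Icc {V : Type*} (G : SimpleGraph V) (f : ℕ → V) (a b : ℕ)
    (hab : a ≤ b) (hadj : ∀ i, a ≤ i → i < b → G.Adj (f i) (f (i + 1))) :
    (G.induce (f '' Set.Icc a b)).Connected := by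
  have key : ∀ i (hi : i ∈ Set.Icc a b), (G.induce (f '' Set.Icc a b)).Reachable
      ⟨f a, a, ⟨le_rfl, hab⟩, rfl⟩ ⟨f i, i, hi, rfl⟩ := by
    intro i
    induction i with
    | zero =>
      intro hi
      obtain rfl : a = 0 := Nat.le_zero.mp hi.1
      exact SimpleGraph.Reachable.refl _
    | succ i ih =>
      intro hi
      rcases Nat.lt_or_ge i a with h | h
      · obtain rfl : a = i + 1 := le_antisymm hi.1 h
        exact SimpleGraph.Reachable.refl _
      · have hib : i < b := hi.2
        refine (ih ⟨h, hib.le⟩).trans (SimpleGraph.Adj.reachable ?_)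
        exact hadj i h hib
  rw [SimpleGraph.connected_iff_exists_forall_reachable]
  refine ⟨⟨f a, a, ⟨le_rfl, hab⟩, rfl⟩, ?_⟩
  rintro ⟨_, i, hi, rfl⟩
  exact key i hi

/-- A cycle `f 0, …, f (n - 1)` together with crossing chords `f 0 f k` and `f i f j`, where
`0 < i < k < j < n`, has a `K₄` minor: the branch sets are the endpoints of the first chord and the
two arcs between them. -/
lemma hasMinor_K4_of_crossing {V : Type*} (G : SimpleGraph V) (f : ℕ → V) (n i j k : ℕ)
    (hinj : ∀ a < n, ∀ b < n, f a = f b → a = b)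
    (hadj : ∀ a < n, G.Adj (f a) (f (a + 1))) (hn : f n = f 0)
    (hi : 0 < i) (hik : i < k) (hkj : k < j) (hjn : j < n)
    (h0k : G.Adj (f 0) (f k)) (hij : G.Adj (f i) (f j)) :
    HasMinor G (⊤ : SimpleGraph (Fin 4)) := by
  let lo : Fin 4 → ℕ := ![0, 1, k, k + 1]
  let hi : Fin 4 → ℕ := ![0, k - 1, k, n - 1]
  have hlohi : ∀ w, lo w ≤ hi w := by
    intro w; fin_cases w <;> simp [lo, hi] <;> omega
  have hhi : ∀ w, hi w < n := by
    intro w; fin_cases w <;> simp [hi] <;> omega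
  have hsep : ∀ w w', w < w' → hi w < lo w' := by
    intro w w' h
    fin_cases w <;> fin_cases w' <;> simp [lo, hi] at h ⊢ <;> omega
  have hdisj : ∀ w w', w < w' →
      Disjoint (f '' Set.Icc (lo w) (hi w)) (f '' Set.Icc (lo w') (hi w')) := by
    intro w w' h
    rw [Set.disjoint_left]
    rintro _ ⟨a, ha, rfl⟩ ⟨b, hb, hba⟩
    have h1 := hsep w w' h
    have h2 := hhi w'
    have h3 := hhi w
    simp only [Set.mem_Icc] at ha hb
    have := hinj b (by omega) a (by omega) hba
    omega
  have hedge : ∀ w w' : Fin 4, w < w' → ∃ x ∈ f '' Set.Icc (lo w) (hi w),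
      ∃ y ∈ f '' Set.Icc (lo w') (hi w'), G.Adj x y := by
    have mk : ∀ (w w' : Fin 4) (a b : ℕ), lo w ≤ a → a ≤ hi w → lo w' ≤ b → b ≤ hi w' →
        G.Adj (f a) (f b) → ∃ x ∈ f '' Set.Icc (lo w) (hi w),
          ∃ y ∈ f '' Set.Icc (lo w') (hi w'), G.Adj x y :=
      fun w w' a b h1 h2 h3 h4 h => ⟨f a, ⟨a, ⟨h1, h2⟩, rfl⟩, f b, ⟨b, ⟨h3, h4⟩, rfl⟩, h⟩
    have e01 : G.Adj (f 0) (f 1) := hadj 0 (by omega)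
    have e0n : G.Adj (f 0) (f (n - 1)) := by
      have := hadj (n - 1) (by omega)
      rw [Nat.sub_add_cancel (by omega), hn] at this
      exact this.symm
    have ek : G.Adj (f (k - 1)) (f k) := by
      have := hadj (k - 1) (by omega)
      rwa [Nat.sub_add_cancel (by omega)] at this
    have ek' : G.Adj (f k) (f (k + 1)) := hadj k (by omega)
    intro w w' h
    fin_cases w <;> fin_cases w' <;> first | (exact absurd h (by decide)) | skip
    · exact mk 0 1 0 1 (by simp [lo]) (by simp [hi]) (by simp [lo]) (by simp [hi]; omega) e01
    · exact mk 0 2 0 k (by simp [lo]) (by simp [hi]) (by simp [lo]) (by simp [hi]) h0k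
    · exact mk 0 3 0 (n - 1) (by simp [lo]) (by simp [hi]) (by simp [lo]; omega) (by simp [hi]) e0n
    · exact mk 1 2 (k - 1) k (by simp [lo]; omega) (by simp [hi]) (by simp [lo]) (by simp [hi]) ek
    · exact mk 1 3 i j (by simp [lo]; omega) (by simp [hi]; omega) (by simp [lo]; omega)
        (by simp [hi]; omega) hij
    · exact mk 2 3 k (k + 1) (by simp [lo]) (by simp [hi]) (by simp [lo]) (by simp [hi]; omega) ek'
  refine ⟨fun w => f '' Set.Icc (lo w) (hi w), ?_, ?_, ?_, ?_⟩
  · exact fun w => ⟨f (lo w), lo w, ⟨le_rfl, hlohi w⟩, rfl⟩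
  · exact fun w => connected_induce_image_Icc G f _ _ (hlohi w)
      fun a _ ha => hadj a (ha.trans (hhi w))
  · intro w w' h
    rcases lt_or_gt_of_ne h with h | h
    · exact hdisj w w' h
    · exact (hdisj w' w h).symm
  · intro w w' h
    rcases lt_or_gt_of_ne h.ne with h | h
    · exact hedge w w' h
    · obtain ⟨x, hx, y, hy, hxy⟩ := hedge w' w h
      exact ⟨y, hy, x, hx, hxy.symm⟩

/-- Let `G'` be a 2-connected outerplanar graph with Hamiltonian cycle `C'`, and let `G` be
the induced subgraph of `G'` on a vertex set `A`. Let `B` be a nontrivial block of `G`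
(a maximal 2-connected subgraph, on at least 3 vertices) with Hamiltonian cycle `CB`, and let
`v` be a vertex of `B` having a neighbor of `G` outside `B`. Then some edge of `CB`
incident to `v` is not an edge of `C'` (i.e. it is an internal edge of `G'`). -/
theorem block_cutvertex_internal_edge {V : Type*} [Fintype V] [DecidableEq V]
    (G' : SimpleGraph V) (hout : IsOuterplanar G')
    (h2 : 3 ≤ Fintype.card V ∧ ∀ x : V, (G'.induce ({x}ᶜ : Set V)).Connected)
    (r : V) (C' : G'.Walk r r) (hC' : C'.IsHamiltonianCycle)
    (A : Set V)
    (B : Set ↥A) (hB : TwoConnectedOn (G'.induce A) B)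
    (hBmax : ∀ B₂ : Set ↥A, B ⊆ B₂ → TwoConnectedOn (G'.induce A) B₂ → B₂ = B)
    (b : ↥B) (CB : ((G'.induce A).induce B).Walk b b) (hCB : CB.IsHamiltonianCycle)
    (v : ↥A) (hv : v ∈ B)
    (hcut : ∃ w : ↥A, w ∉ B ∧ (G'.induce A).Adj v w) :
    ∃ e ∈ CB.edges, (⟨v, hv⟩ : ↥B) ∈ e ∧
      Sym2.map (fun x : ↥B => ((x : ↥A) : V)) e ∉ C'.edges := by
  by_contra hcon
  push Not at hcon
  obtain ⟨w, hwB, hvw⟩ := hcut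
  have hvC : (v : V) ∈ C'.support := hC'.mem_support _
  have hvCB : (⟨v, hv⟩ : ↥B) ∈ CB.support := hCB.mem_support _
  set D := C'.rotate (v : V) hvC with hD
  set E := CB.rotate (⟨v, hv⟩ : ↥B) hvCB with hE
  have hDc : D.IsCycle := hC'.isCycle.rotate hvC
  have hEc : E.IsCycle := hCB.isCycle.rotate hvCB
  -- An edge of `CB` at `v` is, by assumption, an edge of `C'` at `v`.
  have hstep : ∀ x : ↥B, E.toSubgraph.Adj ⟨v, hv⟩ x →
      ((x : ↥A) : V) = D.snd ∨ ((x : ↥A) : V) = D.penultimate := by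
    intro x hx
    rw [SimpleGraph.Walk.adj_toSubgraph_iff_mem_edges] at hx
    have h1 := hcon _ ((CB.rotate_edges _ hvCB).mem_iff.mp hx) (Sym2.mem_mk_left _ _)
    have h2 : D.toSubgraph.Adj (v : V) ((x : ↥A) : V) := by
      rw [SimpleGraph.Walk.adj_toSubgraph_iff_mem_edges]
      exact (C'.rotate_edges _ hvC).mem_iff.mpr h1
    have h3 : ((x : ↥A) : V) ∈ D.toSubgraph.neighborSet (v : V) := h2
    rw [hDc.neighborSet_toSubgraph_endpoint] at h3
    exact h3
  have hs := hstep E.snd (E.toSubgraph_adj_snd hEc.not_nil)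
  have hp := hstep E.penultimate (E.toSubgraph_adj_penultimate hEc.not_nil).symm
  have hne : ((E.snd : ↥A) : V) ≠ ((E.penultimate : ↥A) : V) :=
    fun h => hEc.snd_ne_penultimate (Subtype.ext (Subtype.ext h))
  have hB1 : ∃ x ∈ B, (x : V) = D.snd := by
    rcases hs with h | h
    · exact ⟨E.snd, E.snd.2, h⟩
    · rcases hp with h' | h'
      · exact ⟨E.penultimate, E.penultimate.2, h'⟩
      · exact absurd (h.trans h'.symm) hne
  have hB2 : ∃ x ∈ B, (x : V) = D.penultimate := by
    rcases hp with h | h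
    · rcases hs with h' | h'
      · exact absurd (h'.trans h.symm) hne
      · exact ⟨E.snd, E.snd.2, h'⟩
    · exact ⟨E.penultimate, E.penultimate.2, h⟩
  obtain ⟨p, hpB, hpD⟩ := hB1
  obtain ⟨q, hqB, hqD⟩ := hB2
  set n := D.length with hn
  have hn3 : 3 ≤ n := hDc.three_le_length
  have hinj : ∀ a < n, ∀ b < n, D.getVert a = D.getVert b → a = b := by
    intro a ha b hb h
    exact hDc.getVert_injOn' (show a ≤ n - 1 by omega) (show b ≤ n - 1 by omega) h
  have hf0 : D.getVert 0 = v := D.getVert_zero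
  have hfn : D.getVert n = D.getVert 0 := by rw [hf0]; exact D.getVert_length
  have hidx : ∀ x : V, x ≠ v → ∃ i, 0 < i ∧ i < n ∧ D.getVert i = x := by
    intro x hx
    have hxD : x ∈ D.support :=
      (C'.mem_support_rotate_iff _ hvC).mpr (hC'.mem_support x)
    obtain ⟨i, hi, hin⟩ := SimpleGraph.Walk.mem_support_iff_exists_getVert.mp hxD
    refine ⟨i, Nat.pos_of_ne_zero ?_, lt_of_le_of_ne hin ?_, hi⟩
    · rintro rfl
      exact hx (hi.symm.trans hf0)
    · rintro rfl
      exact hx (hi.symm.trans (hfn.trans hf0))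
  have hwv : (w : V) ≠ v := fun h => hwB (Subtype.ext h ▸ hv)
  obtain ⟨k, hk0, hkn, hkw⟩ := hidx w hwv
  have hpv : (p : V) ≠ v := by
    rw [hpD]; exact (D.adj_snd hDc.not_nil).ne'
  have hqv : (q : V) ≠ v := by
    rw [hqD]; exact (D.adj_penultimate hDc.not_nil).ne
  have hk1 : k ≠ 1 := by
    rintro rfl
    exact hwB ((Subtype.ext (hpD.trans hkw) : p = w) ▸ hpB)
  have hkn1 : k ≠ n - 1 := by
    rintro rfl
    exact hwB ((Subtype.ext (hqD.trans hkw) : q = w) ▸ hqB)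
  -- A walk in `B \ {v}` from `f 1` to `f (n - 1)` must leave the arc `f 1, …, f (k - 1)`.
  let S : Set ↥(B \ {v}) := {x | ∃ i, 0 < i ∧ i < k ∧ D.getVert i = ((x : ↥A) : V)}
  obtain ⟨W⟩ := (hB.2 v hv).preconnected
    ⟨p, hpB, fun h => hpv (congrArg Subtype.val h)⟩
    ⟨q, hqB, fun h => hqv (congrArg Subtype.val h)⟩
  obtain ⟨d, -, ⟨i, hi0, hik, hix⟩, hdS⟩ := W.exists_boundary_dart S
    ⟨1, one_pos, by omega, hpD.symm⟩ (by
      rintro ⟨i, hi0, hik, hi⟩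
      have : i = n - 1 := hinj i (by omega) (n - 1) (by omega) (hi.trans hqD)
      omega)
  obtain ⟨j, hj0, hjn, hjy⟩ := hidx ((d.snd : ↥A) : V)
    fun h => d.snd.2.2 (Subtype.ext h)
  have hkj : k < j := by
    rcases lt_trichotomy j k with h | rfl | h
    · exact absurd ⟨j, hj0, h, hjy⟩ hdS
    · exact absurd ((Subtype.ext (hjy.symm.trans hkw) : (d.snd : ↥A) = w) ▸ d.snd.2.1) hwB
    · exact h
  refine hout.1 (hasMinor_K4_of_crossing G' D.getVert n i j k hinj
    (fun a ha => D.adj_getVert_succ ha) hfn hi0 hik hkj hjn ?_ ?_)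
  · rw [hf0, hkw]; exact hvw
  · rw [hix, hjy]; exact d.adj
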